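/- For a formula ⟨γ*⟩φ and a world w of a model M with M, w ⊨ ⟨γ*⟩φ, there exists a model chain for (M, w, ⟨γ*⟩φ, φ). -/

import Mathlib

mutual
inductive Fml : Type where
  | var : ℕ → Fml
  | neg : Fml → Fml
  | and : Fml → Fml → Fml
  | or : Fml → Fml → Fml
  | dia : Prog → Fml → Fml
  | box : Prog → Fml → Fml
  deriving DecidableEq
inductive Prog : Type where
  | atom : ℕ → Prog
  | conv : ℕ → Prog
  | seq : Prog → Prog → Prog
  | choice : Prog → Prog → Prog
  | star : Prog → Prog
  | test : Fml → Prog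
  deriving DecidableEq
end

structure Model (W : Type) where
  R : ℕ → W → W → Prop
  V : ℕ → W → Prop

mutual
def Sat {W : Type} (M : Model W) : W → Fml → Prop
  | w, .var p => M.V p w
  | w, .neg φ => ¬ Sat M w φ
  | w, .and φ ψ => Sat M w φ ∧ Sat M w ψ
  | w, .or φ ψ => Sat M w φ ∨ Sat M w ψ
  | w, .dia γ φ => ∃ v, PRel M γ w v ∧ Sat M v φ
  | w, .box γ φ => ∀ v, PRel M γ w v → Sat M v φ
def PRel {W : Type} (M : Model W) : Prog → W → W → Prop
  | .atom a, w, v => M.R a w v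
  | .conv a, w, v => M.R a v w
  | .seq γ δ, w, v => ∃ u, PRel M γ w u ∧ PRel M δ u v
  | .choice γ δ, w, v => PRel M γ w v ∨ PRel M δ w v
  | .star γ, w, v => Relation.ReflTransGen (fun a b => PRel M γ a b) w v
  | .test φ, w, v => w = v ∧ Sat M w φ
end
mutual
def IsNNF : Fml → Prop
  | .var _ => True
  | .neg (.var _) => True
  | .neg _ => False
  | .and φ ψ => IsNNF φ ∧ IsNNF ψ
  | .or φ ψ => IsNNF φ ∧ IsNNF ψ
  | .dia γ φ => IsNNFP γ ∧ IsNNF φ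
  | .box γ φ => IsNNFP γ ∧ IsNNF φ
def IsNNFP : Prog → Prop
  | .atom _ => True
  | .conv _ => True
  | .seq γ δ => IsNNFP γ ∧ IsNNFP δ
  | .choice γ δ => IsNNFP γ ∧ IsNNFP δ
  | .star γ => IsNNFP γ
  | .test φ => IsNNF φ
end

mutual
/-- `nnf φ` is the negation normal form of `φ`. -/
def nnf : Fml → Fml
  | .var p => .var p
  | .neg φ => nnfNeg φ
  | .and φ ψ => .and (nnf φ) (nnf ψ)
  | .or φ ψ => .or (nnf φ) (nnf ψ)
  | .dia γ φ => .dia γ (nnf φ)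
  | .box γ φ => .box γ (nnf φ)
/-- `nnfNeg φ = nnf (¬ φ)`, written `∼φ`. -/
def nnfNeg : Fml → Fml
  | .var p => .neg (.var p)
  | .neg φ => nnf φ
  | .and φ ψ => .or (nnfNeg φ) (nnfNeg ψ)
  | .or φ ψ => .and (nnfNeg φ) (nnfNeg ψ)
  | .dia γ φ => .box γ (nnfNeg φ)
  | .box γ φ => .dia γ (nnfNeg φ)
end

/-- Literal programs: atomic programs or converses of atomic programs. -/
inductive Lit : Type where
  | atom : ℕ → Lit
  | conv : ℕ → Lit
  deriving DecidableEq

def Lit.toProg : Lit → Prog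
  | .atom a => .atom a
  | .conv a => .conv a

/-- The converse `l⁻` of a literal program. -/
def Lit.inv : Lit → Lit
  | .atom a => .conv a
  | .conv a => .atom a

/-- The reduction relation `⤳` on ⟨·⟩-formulae. -/
inductive Red : Fml → Fml → Prop where
  | seq (γ δ χ) : Red (.dia (.seq γ δ) χ) (.dia γ (.dia δ χ))
  | choiceL (γ δ χ) : Red (.dia (.choice γ δ) χ) (.dia γ χ)
  | choiceR (γ δ χ) : Red (.dia (.choice γ δ) χ) (.dia δ χ)
  | star1 (γ χ) : Red (.dia (.star γ) χ) χ
  | star2 (γ χ) : Red (.dia (.star γ) χ) (.dia γ (.dia (.star γ) χ))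
  | test (ϕ χ) : Red (.dia (.test ϕ) χ) χ

/-- `InPre ψ φ` means `φ ∈ pre(ψ)`, i.e. `φ = ⟨γ₁⟩…⟨γ_k⟩ψ`. -/
inductive InPre (ψ : Fml) : Fml → Prop where
  | base : InPre ψ ψ
  | step (γ φ) : InPre ψ φ → InPre ψ (.dia γ φ)

/-- `φ` is an eventuality: `φ = ⟨γ₁⟩…⟨γ_k⟩⟨γ*⟩ψ`. -/
def IsEv (φ : Fml) : Prop := ∃ γ ψ, InPre (.dia (.star γ) ψ) φ

mutual
/-- Size of formulas. -/
def fsize : Fml → ℕ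
  | .var _ => 1
  | .neg (.var _) => 1
  | .neg φ => 1 + fsize φ
  | .and φ ψ => 1 + fsize φ + fsize ψ
  | .or φ ψ => 1 + fsize φ + fsize ψ
  | .dia γ φ => psize γ + fsize φ
  | .box γ φ => psize γ + fsize φ
/-- Size of programs. -/
def psize : Prog → ℕ
  | .atom _ => 1
  | .conv _ => 1
  | .seq γ δ => 1 + psize γ + psize δ
  | .choice γ δ => 1 + psize γ + psize δ
  | .star γ => 1 + psize γ
  | .test φ => 1 + fsize φ
end
/-- One decomposition step generating the closure `cl(φ)`. -/
inductive ClStep : Fml → Fml → Prop where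
  | diaLit (l : Lit) (ψ) : ClStep (.dia l.toProg ψ) ψ
  | boxLit (l : Lit) (ψ) : ClStep (.box l.toProg ψ) ψ
  | andL (φ ψ) : ClStep (.and φ ψ) φ
  | andR (φ ψ) : ClStep (.and φ ψ) ψ
  | orL (φ ψ) : ClStep (.or φ ψ) φ
  | orR (φ ψ) : ClStep (.or φ ψ) ψ
  | boxChoiceL (γ δ φ) : ClStep (.box (.choice γ δ) φ) (.box γ φ)
  | boxChoiceR (γ δ φ) : ClStep (.box (.choice γ δ) φ) (.box δ φ)
  | boxStar1 (γ φ) : ClStep (.box (.star γ) φ) φ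
  | boxStar2 (γ φ) : ClStep (.box (.star γ) φ) (.box γ (.box (.star γ) φ))
  | diaTest1 (ψ φ) : ClStep (.dia (.test ψ) φ) φ
  | diaTest2 (ψ φ) : ClStep (.dia (.test ψ) φ) ψ
  | diaSeq (γ δ φ) : ClStep (.dia (.seq γ δ) φ) (.dia γ (.dia δ φ))
  | boxSeq (γ δ φ) : ClStep (.box (.seq γ δ) φ) (.box γ (.box δ φ))
  | diaChoiceL (γ δ φ) : ClStep (.dia (.choice γ δ) φ) (.dia γ φ)
  | diaChoiceR (γ δ φ) : ClStep (.dia (.choice γ δ) φ) (.dia δ φ)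
  | diaStar1 (γ φ) : ClStep (.dia (.star γ) φ) φ
  | diaStar2 (γ φ) : ClStep (.dia (.star γ) φ) (.dia γ (.dia (.star γ) φ))
  | boxTest1 (ψ φ) : ClStep (.box (.test ψ) φ) φ
  | boxTest2 (ψ φ) : ClStep (.box (.test ψ) φ) (nnfNeg ψ)

/-- The closure `cl(φ)`: the least set containing `φ` and closed under `ClStep`. -/
def Cl (φ : Fml) : Set Fml := {ψ | Relation.ReflTransGen ClStep φ ψ}

/-- A single step of a (model) chain: a literal-program diamond is instantiated,
otherwise a `⤳`-reduction happens at the same world. -/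
def ChainStep {W : Type} (M : Model W) : (W × Fml) → (W × Fml) → Prop
  | (w, .dia (.atom a) χ), (w', χ') => χ' = χ ∧ M.R a w w'
  | (w, .dia (.conv a) χ), (w', χ') => χ' = χ ∧ M.R a w' w
  | (w, χ), (w', χ') => Red χ χ' ∧ w' = w

/-- `σ` is a model chain for `(M, w, φ, ψ)`. -/
def ModelChain {W : Type} (M : Model W) (w : W) (φ ψ : Fml) (σ : List (W × Fml)) : Prop :=
  ∃ h : σ ≠ [], σ.head h = (w, φ) ∧ (σ.getLast h).2 = ψ ∧
    (∀ p ∈ σ, Sat M p.1 p.2) ∧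
    ∀ i, (h1 : i + 1 < σ.length) →
      ChainStep M (σ.get ⟨i, by omega⟩) (σ.get ⟨i + 1, h1⟩)

open Classical in
/-- `ex φ`: the largest non-eventuality `ψ` with `φ ∈ pre(ψ)`. -/
noncomputable def ex : Fml → Fml
  | .dia γ ψ => if IsEv (.dia γ ψ) then ex ψ else .dia γ ψ
  | φ => φ

mutual
/-- `SubF χ φ`: `χ` is a subformula of the formula `φ`. -/
inductive SubF : Fml → Fml → Prop where
  | refl (φ) : SubF φ φ
  | neg {χ φ} : SubF χ φ → SubF χ (.neg φ)
  | andL {χ φ ψ} : SubF χ φ → SubF χ (.and φ ψ)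
  | andR {χ φ ψ} : SubF χ ψ → SubF χ (.and φ ψ)
  | orL {χ φ ψ} : SubF χ φ → SubF χ (.or φ ψ)
  | orR {χ φ ψ} : SubF χ ψ → SubF χ (.or φ ψ)
  | diaF {χ γ φ} : SubF χ φ → SubF χ (.dia γ φ)
  | diaP {χ γ φ} : SubP χ γ → SubF χ (.dia γ φ)
  | boxF {χ γ φ} : SubF χ φ → SubF χ (.box γ φ)
  | boxP {χ γ φ} : SubP χ γ → SubF χ (.box γ φ)
/-- `SubP χ γ`: `χ` is a subformula of the program `γ`. -/
inductive SubP : Fml → Prog → Prop where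
  | seqL {χ γ δ} : SubP χ γ → SubP χ (.seq γ δ)
  | seqR {χ γ δ} : SubP χ δ → SubP χ (.seq γ δ)
  | choiceL {χ γ δ} : SubP χ γ → SubP χ (.choice γ δ)
  | choiceR {χ γ δ} : SubP χ δ → SubP χ (.choice γ δ)
  | star {χ γ} : SubP χ γ → SubP χ (.star γ)
  | test {χ φ} : SubF χ φ → SubP χ (.test φ)
end
/-- `ann` is an annotation for `Γ`: it maps some eventualities `φ ∈ Γ`
to a formula `ann φ ∈ Γ` with `φ ⤳ ann φ`. -/
def IsAnnotation (Γ : Set Fml) (ann : Fml → Option Fml) : Prop :=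
  ∀ φ φ', ann φ = some φ' → φ ∈ Γ ∧ IsEv φ ∧ φ' ∈ Γ ∧ Red φ φ'

/-- `ann` is full on `Γ`: it is defined on all eventualities of `Γ`. -/
def FullAnn (Γ : Set Fml) (ann : Fml → Option Fml) : Prop :=
  ∀ φ ∈ Γ, IsEv φ → (ann φ).isSome

/-- `ann` is non-cyclic: there is no cycle `φ₀, …, φ_n` with `ann φ_i = φ_{i+1 mod n+1}`. -/
def NonCyclic (ann : Fml → Option Fml) : Prop :=
  ¬ ∃ (n : ℕ) (f : ℕ → Fml), (∀ i < n, ann (f i) = some (f (i + 1))) ∧ ann (f n) = some (f 0)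

/-- One step of iterating an annotation (identity where undefined). -/
def annStep (ann : Fml → Option Fml) (φ : Fml) : Fml := (ann φ).getD φ

/-- The pure-formula version of a chain step:
if `χ = ⟨l⟩χ₀` for a literal program `l` then `χ' = χ₀`, else `χ ⤳ χ'`. -/
def FStep : Fml → Fml → Prop
  | .dia (.atom _) χ, χ' => χ' = χ
  | .dia (.conv _) χ, χ' => χ' = χ
  | χ, χ' => Red χ χ'

mutual
/-- The atomic program `d` occurs in a formula. -/
def OccursF (d : ℕ) : Fml → Prop
  | .var _ => False
  | .neg φ => OccursF d φ
  | .and φ ψ => OccursF d φ ∨ OccursF d ψ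
  | .or φ ψ => OccursF d φ ∨ OccursF d ψ
  | .dia γ φ => OccursP d γ ∨ OccursF d φ
  | .box γ φ => OccursP d γ ∨ OccursF d φ
/-- The atomic program `d` occurs in a program (as `d` or `d⁻`). -/
def OccursP (d : ℕ) : Prog → Prop
  | .atom a => a = d
  | .conv a => a = d
  | .seq γ δ => OccursP d γ ∨ OccursP d δ
  | .choice γ δ => OccursP d γ ∨ OccursP d δ
  | .star γ => OccursP d γ
  | .test φ => OccursF d φ
end

/-- `(M, w, chn)` annotated-satisfies `(Γ, ann)`. -/
def AnnSat {W : Type} (M : Model W) (w : W)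
    (chn : Fml → Option (List (W × Fml))) (Γ : Set Fml) (ann : Fml → Option Fml) : Prop :=
  (∀ ψ ∈ Γ, Sat M w ψ) ∧
  (∀ ψ ∈ Γ, IsEv ψ → (chn ψ).isSome) ∧
  (∀ ψ σ, IsEv ψ → chn ψ = some σ →
    ModelChain M w ψ (ex ψ) σ ∧
    (∀ i, (h : i < σ.length) → ∀ χ, σ.get ⟨i, h⟩ = (w, χ) → IsEv χ → chn χ = some (σ.drop i)) ∧
    (∀ ψ', ann ψ = some ψ' → ∃ h : 1 < σ.length, σ.get ⟨1, h⟩ = (w, ψ')))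

/-!
Model chains are built backwards, by adding one pair at a time at the front. By induction on `γ`, a
`γ`-transition from `w` to `v` turns a model chain starting at `(v, χ)` into one starting at
`(w, ⟨γ⟩χ)`: for `γδ` the transition along `δ` is absorbed first, then the one along `γ`, and for
`γ*` the `γ`-steps are absorbed from the last to the first. Every formula added holds at its world
because the given transition leads to `v`, where `χ` holds.
-/

section

variable {W : Type} {M : Model W} {w v : W} {γ : Prog} {φ χ ψ : Fml} {σ : List (W × Fml)}

theorem sat_dia_of_pRel (h : PRel M γ w v) (hχ : Sat M v χ) : Sat M w (.dia γ χ) := by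
  rw [Sat]
  exact ⟨v, h, hχ⟩

theorem chainStep_of_red (h : Red φ χ) : ChainStep M (w, φ) (w, χ) := by
  -- A literal diamond has no reduct, so every case falls under the last clause of `ChainStep`.
  have hred := h
  cases h <;> exact ⟨hred, rfl⟩

namespace ModelChain

theorem sat_head (h : ModelChain M w φ ψ σ) : Sat M w φ := by
  obtain ⟨hne, hhead, -, hsat, -⟩ := h
  simpa only [hhead] using hsat _ (List.head_mem hne)

theorem singleton (hφ : Sat M w φ) : ModelChain M w φ φ [(w, φ)] :=
  ⟨List.cons_ne_nil _ _, rfl, rfl, List.forall_mem_singleton.2 hφ, fun _ hi => by simp at hi⟩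

theorem cons (hφ : Sat M w φ) (hstep : ChainStep M (w, φ) (v, χ)) (h : ModelChain M v χ ψ σ) :
    ModelChain M w φ ψ ((w, φ) :: σ) := by
  obtain ⟨hne, hhead, hlast, hsat, hsteps⟩ := h
  refine ⟨List.cons_ne_nil _ _, rfl, by rwa [List.getLast_cons hne],
    List.forall_mem_cons.2 ⟨hφ, hsat⟩, ?_⟩
  rintro (_ | i) hi
  · have hfirst : σ[0]'(List.length_pos_iff.2 hne) = (v, χ) := by
      rw [← List.head_eq_getElem hne, hhead]
    simpa [hfirst] using hstep
  · exact hsteps i (Nat.lt_of_succ_lt_succ hi)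

theorem exists_cons (hφ : Sat M w φ) (hstep : ChainStep M (w, φ) (v, χ))
    (h : ∃ σ, ModelChain M v χ ψ σ) : ∃ σ, ModelChain M w φ ψ σ :=
  let ⟨_, hσ⟩ := h
  ⟨_, hσ.cons hφ hstep⟩

theorem exists_cons_of_red (hφ : Sat M w φ) (hred : Red φ χ) (h : ∃ σ, ModelChain M w χ ψ σ) :
    ∃ σ, ModelChain M w φ ψ σ :=
  exists_cons hφ (chainStep_of_red hred) h

theorem exists_dia_star_of_reflTransGen
    (extend : ∀ {u u' : W}, PRel M γ u u' → (∃ σ, ModelChain M u' (.dia (.star γ) χ) ψ σ) →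
      ∃ σ, ModelChain M u (.dia γ (.dia (.star γ) χ)) ψ σ)
    (hpath : Relation.ReflTransGen (PRel M γ) w v) (h : ∃ σ, ModelChain M v χ ψ σ) :
    ∃ σ, ModelChain M w (.dia (.star γ) χ) ψ σ := by
  have sat_star {u : W} (hu : Relation.ReflTransGen (PRel M γ) u v) :
      Sat M u (.dia (.star γ) χ) :=
    let ⟨_, hσ⟩ := h
    sat_dia_of_pRel (by rwa [PRel]) hσ.sat_head
  induction hpath using Relation.ReflTransGen.head_induction_on with
  | refl => exact exists_cons_of_red (sat_star .refl) (.star1 γ χ) h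
  | head hstep hrest ih =>
    exact exists_cons_of_red (sat_star (.head hstep hrest)) (.star2 γ χ) (extend hstep ih)

theorem exists_dia_of_pRel (γ : Prog) {w v : W} {χ : Fml} (hrel : PRel M γ w v)
    (h : ∃ σ, ModelChain M v χ ψ σ) : ∃ σ, ModelChain M w (.dia γ χ) ψ σ := by
  have hsat : Sat M w (.dia γ χ) :=
    let ⟨_, hσ⟩ := h
    sat_dia_of_pRel hrel hσ.sat_head
  match γ with
  | .atom a =>
    rw [PRel] at hrel
    exact exists_cons hsat ⟨rfl, hrel⟩ h
  | .conv a =>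
    rw [PRel] at hrel
    exact exists_cons hsat ⟨rfl, hrel⟩ h
  | .seq γ δ =>
    rw [PRel] at hrel
    obtain ⟨u, hγ, hδ⟩ := hrel
    exact exists_cons_of_red hsat (.seq γ δ χ)
      (exists_dia_of_pRel γ hγ (exists_dia_of_pRel δ hδ h))
  | .choice γ δ =>
    rw [PRel] at hrel
    rcases hrel with hγ | hδ
    · exact exists_cons_of_red hsat (.choiceL γ δ χ) (exists_dia_of_pRel γ hγ h)
    · exact exists_cons_of_red hsat (.choiceR γ δ χ) (exists_dia_of_pRel δ hδ h)
  | .star γ =>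
    rw [PRel] at hrel
    exact exists_dia_star_of_reflTransGen (exists_dia_of_pRel γ) hrel h
  | .test θ =>
    rw [PRel] at hrel
    obtain ⟨rfl, -⟩ := hrel
    exact exists_cons_of_red hsat (.test θ χ) h

end ModelChain

end

theorem star_model_chain_general {W : Type} (M : Model W) (w : W) (γ : Prog) (φ : Fml)
    (hsat : Sat M w (.dia γ φ)) : ∃ σ, ModelChain M w (.dia γ φ) φ σ := by
  rw [Sat] at hsat
  obtain ⟨v, hrel, hφ⟩ := hsat
  exact ModelChain.exists_dia_of_pRel γ hrel ⟨_, .singleton hφ⟩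

/-- if `M, w ⊨ ⟨γ*⟩φ` then there is a model chain
for `(M, w, ⟨γ*⟩φ, φ)`. -/
theorem star_model_chain {W : Type} (M : Model W) (w : W) (γ : Prog) (φ : Fml)
    (hsat : Sat M w (.dia (.star γ) φ)) :
    ∃ σ, ModelChain M w (.dia (.star γ) φ) φ σ :=
  star_model_chain_general M w (.star γ) φ hsat
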